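/- arXiv:1702.03981 — 2 statements merged into one kernel-verified Lean document; each statement's English description precedes it below -/
import Mathlib

section
/- Soundness of Cyclic Proof Systems: Let a cyclic entailment system be given together with an ordinal trace function 𝒪 satisfying the descending counter-model property. If P is a valid cyclic proof of a sequent S — i.e. a pre-proof in which every infinite path has a tail followed by an infinitely progressing left-hand trace — then S is valid (every model m with m ⊨_𝒜 A also satisfies m ⊨_𝒞 C, where S = A ⊢ C). -/
noncomputable section

/-- We work with ordinals in universe 0. -/
abbrev Ordl : Type 1 := Ordinal.{0}

/-- Reverse ordinal sum: `revSum d k = d (k-1) + ⋯ + d 0` (and `0` for `k = 0`). -/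
def revSum (d : ℕ → Ordl) : ℕ → Ordl
  | 0 => 0
  | k + 1 => d k + revSum d k

/-- An abstract entailment system: antecedents, consequents, models, the two
satisfaction relations, and finite sets of trace values for antecedents and
consequents (drawn from the disjoint types `TA` and `TC`). -/
structure CES where
  A : Type
  C : Type
  M : Type
  TA : Type
  TC : Type
  satA : M → A → Prop
  satC : M → C → Prop
  tvA : A → Finset TA
  tvC : C → Finset TC

/-- Validity of a sequent `A ⊢ C`: every model of the antecedent satisfies the consequent. -/
def CES.Valid (S : CES) (s : S.A × S.C) : Prop :=
  ∀ m : S.M, S.satA m s.1 → S.satC m s.2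

/-- A cyclic pre-proof: a finite directed graph whose nodes carry sequents and
(ordered) lists of children, together with the trace pair functions `δ1` (on
antecedent trace values) and `δ2` (on consequent trace values) attached to the
rule instance at each node/premise.  `δ1`/`δ2` are partial (Option-valued) and
only defined along edges, on trace values of the respective sequents. -/
structure PreProof (S : CES) where
  Node : Type
  [fintypeNode : Fintype Node]
  [decEqNode : DecidableEq Node]
  seqOf : Node → S.A × S.C
  children : Node → List Node
  δ1 : Node → Node → S.TA → S.TA → Option Ordl
  δ2 : Node → Node → S.TC → S.TC → Option Ordl
  δ1_dom : ∀ ν ν' τ τ', (δ1 ν ν' τ τ').isSome →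
    ν' ∈ children ν ∧ τ ∈ S.tvA (seqOf ν).1 ∧ τ' ∈ S.tvA (seqOf ν').1
  δ2_dom : ∀ ν ν' τ τ', (δ2 ν ν' τ τ').isSome →
    ν' ∈ children ν ∧ τ ∈ S.tvC (seqOf ν).2 ∧ τ' ∈ S.tvC (seqOf ν').2

attribute [instance] PreProof.fintypeNode PreProof.decEqNode

/-- An ordinal trace function: partial ordinal-valued functions on
(antecedent resp. consequent) trace value/model pairs, defined at least on all
`(τ, m)` with `τ ∈ tvA A` and `m ⊨ A`. -/
structure OTF (S : CES) where
  OA : S.TA → S.M → Option Ordl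
  OC : S.TC → S.M → Option Ordl
  definedA : ∀ (a : S.A) (τ : S.TA) (m : S.M),
    τ ∈ S.tvA a → S.satA m a → (OA τ m).isSome

/-- `1̲`: the least value taken by the ordinal trace function. -/
def OTF.leastVal {S : CES} (O : OTF S) : Ordl :=
  sInf {o : Ordl | (∃ τ m, O.OA τ m = some o) ∨ (∃ τ m, O.OC τ m = some o)}

/-- A sequent `s` equates trace values `τa` and `τc`: whenever `s` is valid,
every model of the antecedent realizing `τc` realizes `τa` with the same size. -/
def OTF.Equates {S : CES} (O : OTF S) (s : S.A × S.C) (τa : S.TA) (τc : S.TC) : Prop :=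
  S.Valid s → ∀ m : S.M, S.satA m s.1 →
    ∀ o : Ordl, O.OC τc m = some o → O.OA τa m = some o

namespace PreProof

variable {S : CES}

/-- A node is axiomatic when its rule instance has no premises. -/
def Axiomatic (P : PreProof S) (ν : P.Node) : Prop := P.children ν = []

/-- `νs 0, …, νs (n-1)` is a (finite) path in the pre-proof. -/
def IsPath (P : PreProof S) (n : ℕ) (νs : ℕ → P.Node) : Prop :=
  ∀ i, i + 1 < n → νs (i + 1) ∈ P.children (νs i)

/-- An infinite path in the pre-proof. -/
def InfPath (P : PreProof S) (νs : ℕ → P.Node) : Prop :=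
  ∀ i, νs (i + 1) ∈ P.children (νs i)

/-- A left-hand trace `τs 0, …, τs (k-1)` follows (an initial segment of) the
path `νs 0, …, νs (n-1)`. -/
def FollowsL (P : PreProof S) (n : ℕ) (νs : ℕ → P.Node) (k : ℕ) (τs : ℕ → S.TA) : Prop :=
  k ≤ n ∧ (∀ i < k, τs i ∈ S.tvA (P.seqOf (νs i)).1) ∧
    ∀ i, i + 1 < k → (P.δ1 (νs i) (νs (i + 1)) (τs i) (τs (i + 1))).isSome

/-- A right-hand trace `τs 0, …, τs (k-1)` follows (an initial segment of) the
path `νs 0, …, νs (n-1)`. -/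
def FollowsR (P : PreProof S) (n : ℕ) (νs : ℕ → P.Node) (k : ℕ) (τs : ℕ → S.TC) : Prop :=
  k ≤ n ∧ (∀ i < k, τs i ∈ S.tvC (P.seqOf (νs i)).2) ∧
    ∀ i, i + 1 < k → (P.δ2 (νs i) (νs (i + 1)) (τs i) (τs (i + 1))).isSome

/-- The `δ1`-value of the `i`-th step of a left-hand trace along a path. -/
def stepL (P : PreProof S) (νs : ℕ → P.Node) (τs : ℕ → S.TA) (i : ℕ) : Ordl :=
  (P.δ1 (νs i) (νs (i + 1)) (τs i) (τs (i + 1))).getD 0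

/-- The `δ2`-value of the `i`-th step of a right-hand trace along a path. -/
def stepR (P : PreProof S) (νs : ℕ → P.Node) (τs : ℕ → S.TC) (i : ℕ) : Ordl :=
  (P.δ2 (νs i) (νs (i + 1)) (τs i) (τs (i + 1))).getD 0

/-- Size `Θ` of a left-hand trace of length `k` along a path: the *reverse*
ordinal sum `δ1(τ_{k-2},τ_{k-1}) + ⋯ + δ1(τ_0,τ_1)`. -/
def thetaL (P : PreProof S) (νs : ℕ → P.Node) (τs : ℕ → S.TA) (k : ℕ) : Ordl :=
  revSum (P.stepL νs τs) (k - 1)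

/-- Size `Θ` of a right-hand trace of length `k` along a path (reverse sum). -/
def thetaR (P : PreProof S) (νs : ℕ → P.Node) (τs : ℕ → S.TC) (k : ℕ) : Ordl :=
  revSum (P.stepR νs τs) (k - 1)

/-- The global soundness condition: every infinite path has a tail followed by
an infinitely progressing left-hand trace. -/
def GlobalSound (P : PreProof S) : Prop :=
  ∀ νs : ℕ → P.Node, P.InfPath νs →
    ∃ (k : ℕ) (τs : ℕ → S.TA),
      (∀ i, (P.δ1 (νs (k + i)) (νs (k + i + 1)) (τs i) (τs (i + 1))).isSome) ∧
      ∀ N, ∃ i, N ≤ i ∧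
        ∃ α : Ordl, P.δ1 (νs (k + i)) (νs (k + i + 1)) (τs i) (τs (i + 1)) = some α ∧ 0 < α

/-- A (valid) cyclic proof: a pre-proof satisfying the global soundness
condition; consequently (and we record it as part of the notion) all sequents
occurring in it are valid. -/
def IsCyclicProof (P : PreProof S) : Prop :=
  P.GlobalSound ∧ ∀ ν : P.Node, S.Valid (P.seqOf ν)

/-- The descending counter-model property of an ordinal trace function. -/
def DCM (P : PreProof S) (O : OTF S) : Prop :=
  ∀ (ν : P.Node) (m : S.M),
    S.satA m (P.seqOf ν).1 → ¬ S.satC m (P.seqOf ν).2 →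
    ∃ ν' ∈ P.children ν, ∃ m' : S.M,
      S.satA m' (P.seqOf ν').1 ∧ ¬ S.satC m' (P.seqOf ν').2 ∧
      ∀ (τ τ' : S.TA) (α : Ordl), P.δ1 ν ν' τ τ' = some α →
        ∀ o : Ordl, O.OA τ m = some o →
          ∃ o' : Ordl, O.OA τ' m' = some o' ∧ o' + α ≤ o

/-- A right-hand trace value is terminal for a node when it has no successor
trace value towards any premise. -/
def TerminalR (P : PreProof S) (ν : P.Node) (σ : S.TC) : Prop :=
  ∀ ν' ∈ P.children ν, ∀ σ', P.δ2 ν ν' σ σ' = none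

/-- Defining property of the exclusion predicate: a rule instance (node)
excludes a consequent trace value only if no model of the antecedent realizes
it. -/
def ExclOK (P : PreProof S) (O : OTF S) (Excl : P.Node → S.TC → Prop) : Prop :=
  ∀ (ν : P.Node) (σ : S.TC), Excl ν σ →
    ∀ m : S.M, S.satA m (P.seqOf ν).1 → O.OC σ m = none

/-- A consequent trace value is ground w.r.t. a node: if the node's sequent is
valid then the value is realized only with the least possible size. -/
def Ground (P : PreProof S) (O : OTF S) (ν : P.Node) (σ : S.TC) : Prop :=
  S.Valid (P.seqOf ν) → ∀ m : S.M, S.satA m (P.seqOf ν).1 →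
    ∀ o : Ordl, O.OC σ m = some o → o = O.leastVal

/-- The trace value ordering relation `τ2 ∼^ν_P τ1` (`∼` is `<` when
`strict = true` and `≤` otherwise). -/
def TVO (P : PreProof S) (O : OTF S) (Excl : P.Node → S.TC → Prop) (strict : Bool)
    (ν0 : P.Node) (τ1 : S.TA) (τ2 : S.TC) : Prop :=
  ∀ (n : ℕ) (νs : ℕ → P.Node) (τs : ℕ → S.TC),
    1 ≤ n → P.IsPath n νs → νs 0 = ν0 → τs 0 = τ2 →
    P.FollowsR n νs n τs →
    P.TerminalR (νs (n - 1)) (τs (n - 1)) →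
    ¬ Excl (νs (n - 1)) (τs (n - 1)) →
    ∃ (k : ℕ) (τs' : ℕ → S.TA),
      1 ≤ k ∧ k ≤ n ∧ τs' 0 = τ1 ∧ P.FollowsL n νs k τs' ∧
      (if strict then P.thetaR νs τs n < P.thetaL νs τs' k
        else P.thetaR νs τs n ≤ P.thetaL νs τs' k) ∧
      (P.Ground O (νs (n - 1)) (τs (n - 1)) ∨
        (P.Axiomatic (νs (n - 1)) ∧ k = n ∧
          O.Equates (P.seqOf (νs (n - 1))) (τs' (n - 1)) (τs (n - 1))))

/-- The descending model property of an ordinal trace function. -/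
def DMP (P : PreProof S) (O : OTF S) : Prop :=
  ∀ ν : P.Node, P.children ν ≠ [] →
    S.Valid (P.seqOf ν) → (∀ ν' ∈ P.children ν, S.Valid (P.seqOf ν')) →
    ∀ τ1 ∈ S.tvA (P.seqOf ν).1, ∀ τ2 ∈ S.tvC (P.seqOf ν).2,
    ∀ m : S.M, S.satA m (P.seqOf ν).1 →
    ∃ ν' ∈ P.children ν, ∃ m' : S.M,
      S.satA m' (P.seqOf ν').1 ∧
      (P.TerminalR ν τ2 ∨ ∃ σ', (P.δ2 ν ν' τ2 σ').isSome) ∧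
      (∀ (σ' : S.TA) (α : Ordl), P.δ1 ν ν' τ1 σ' = some α →
        ∀ o : Ordl, O.OA τ1 m = some o →
          ∃ o' : Ordl, O.OA σ' m' = some o' ∧ o' + α ≤ o) ∧
      (∀ (σ' : S.TC) (α : Ordl), P.δ2 ν ν' τ2 σ' = some α →
        ∀ o : Ordl, O.OC τ2 m = some o →
          ∃ o' : Ordl, O.OC σ' m' = some o' ∧ o ≤ o' + α)

/-- A sequence of models supports a left-hand trace along a path. -/
def SupportsL (P : PreProof S) (O : OTF S) (n : ℕ) (νs : ℕ → P.Node) (k : ℕ)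
    (τs : ℕ → S.TA) (ms : ℕ → S.M) : Prop :=
  P.FollowsL n νs k τs ∧
    (∀ i < k, S.satA (ms i) (P.seqOf (νs i)).1 ∧ (O.OA (τs i) (ms i)).isSome) ∧
    ∀ j, j + 1 < k → ∀ o o' : Ordl, O.OA (τs j) (ms j) = some o →
      O.OA (τs (j + 1)) (ms (j + 1)) = some o' →
      o' + P.stepL νs τs j ≤ o

/-- A sequence of models supports a right-hand trace along a path. -/
def SupportsR (P : PreProof S) (O : OTF S) (n : ℕ) (νs : ℕ → P.Node) (k : ℕ)
    (τs : ℕ → S.TC) (ms : ℕ → S.M) : Prop :=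
  P.FollowsR n νs k τs ∧
    (∀ i < k, S.satC (ms i) (P.seqOf (νs i)).2 ∧ (O.OC (τs i) (ms i)).isSome) ∧
    ∀ j, j + 1 < k → ∀ o o' : Ordl, O.OC (τs j) (ms j) = some o →
      O.OC (τs (j + 1)) (ms (j + 1)) = some o' →
      o ≤ o' + P.stepR νs τs j

/-- `(ν', τ')` is reachable from `(ν, τ)` on the left. -/
def ReachL (P : PreProof S) (ν : P.Node) (τ : S.TA) (ν' : P.Node) (τ' : S.TA) : Prop :=
  ∃ (n : ℕ) (νs : ℕ → P.Node) (τs : ℕ → S.TA),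
    1 ≤ n ∧ P.IsPath n νs ∧ P.FollowsL n νs n τs ∧
    νs 0 = ν ∧ τs 0 = τ ∧ νs (n - 1) = ν' ∧ τs (n - 1) = τ'

/-- `(ν', τ')` is reachable from `(ν, τ)` on the right. -/
def ReachR (P : PreProof S) (ν : P.Node) (τ : S.TC) (ν' : P.Node) (τ' : S.TC) : Prop :=
  ∃ (n : ℕ) (νs : ℕ → P.Node) (τs : ℕ → S.TC),
    1 ≤ n ∧ P.IsPath n νs ∧ P.FollowsR n νs n τs ∧
    νs 0 = ν ∧ τs 0 = τ ∧ νs (n - 1) = ν' ∧ τs (n - 1) = τ'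

/-- A left cycle along a path. -/
def IsCycleL (P : PreProof S) (n : ℕ) (νs : ℕ → P.Node) (τs : ℕ → S.TA) : Prop :=
  2 ≤ n ∧ P.IsPath n νs ∧ P.FollowsL n νs n τs ∧ νs (n - 1) = νs 0 ∧ τs (n - 1) = τs 0

/-- A right cycle along a path. -/
def IsCycleR (P : PreProof S) (n : ℕ) (νs : ℕ → P.Node) (τs : ℕ → S.TC) : Prop :=
  2 ≤ n ∧ P.IsPath n νs ∧ P.FollowsR n νs n τs ∧ νs (n - 1) = νs 0 ∧ τs (n - 1) = τs 0

/-- A simple left cycle. -/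
def IsSimpleCycleL (P : PreProof S) (n : ℕ) (νs : ℕ → P.Node) (τs : ℕ → S.TA) : Prop :=
  P.IsCycleL n νs τs ∧
    ∀ i j, 1 ≤ i → i < j → j ≤ n - 1 → ¬ (νs i = νs j ∧ τs i = τs j)

/-- A simple right cycle. -/
def IsSimpleCycleR (P : PreProof S) (n : ℕ) (νs : ℕ → P.Node) (τs : ℕ → S.TC) : Prop :=
  P.IsCycleR n νs τs ∧
    ∀ i j, 1 ≤ i → i < j → j ≤ n - 1 → ¬ (νs i = νs j ∧ τs i = τs j)

/-- A simple left binary cycle. -/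
def IsSimpleBinCycleL (P : PreProof S) (n : ℕ) (νs : ℕ → P.Node)
    (τs τs' : ℕ → S.TA) : Prop :=
  P.IsCycleL n νs τs ∧ P.IsCycleL n νs τs' ∧
    ∀ i j, 1 ≤ i → i < j → j ≤ n - 1 →
      ¬ (νs i = νs j ∧ τs i = τs j ∧ τs' i = τs' j)

/-- `P` is left finitely progressing w.r.t. `(ν0, τ0)`. -/
def FinProgL (P : PreProof S) (ν0 : P.Node) (τ0 : S.TA) : Prop :=
  ∀ (ν1 ν2 : P.Node) (τ1 τ2 : S.TA) (α : Ordl),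
    P.ReachL ν0 τ0 ν1 τ1 → P.δ1 ν1 ν2 τ1 τ2 = some α → α < Ordinal.omega0

/-- `P` is right finitely progressing w.r.t. `(ν0, τ0)`. -/
def FinProgR (P : PreProof S) (ν0 : P.Node) (τ0 : S.TC) : Prop :=
  ∀ (ν1 ν2 : P.Node) (τ1 τ2 : S.TC) (α : Ordl),
    P.ReachR ν0 τ0 ν1 τ1 → P.δ2 ν1 ν2 τ1 τ2 = some α → α < Ordinal.omega0

/-- `P` is dynamic w.r.t. `ν0`, `τA`, `τC`: every reachable left or right
simple cycle has strictly positive size. -/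
def Dynamic (P : PreProof S) (ν0 : P.Node) (τA : S.TA) (τC : S.TC) : Prop :=
  (∀ (n : ℕ) (νs : ℕ → P.Node) (τs : ℕ → S.TA), P.IsSimpleCycleL n νs τs →
    P.ReachL ν0 τA (νs 0) (τs 0) → 0 < P.thetaL νs τs n) ∧
  (∀ (n : ℕ) (νs : ℕ → P.Node) (τs : ℕ → S.TC), P.IsSimpleCycleR n νs τs →
    P.ReachR ν0 τC (νs 0) (τs 0) → 0 < P.thetaR νs τs n)

/-- `P` is balanced w.r.t. `(ν0, τA)`: the two components of every reachable
simple left binary cycle have equal size. -/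
def Balanced (P : PreProof S) (ν0 : P.Node) (τA : S.TA) : Prop :=
  ∀ (n : ℕ) (νs : ℕ → P.Node) (τs τs' : ℕ → S.TA), P.IsSimpleBinCycleL n νs τs τs' →
    P.ReachL ν0 τA (νs 0) (τs 0) → P.ReachL ν0 τA (νs 0) (τs' 0) →
    P.thetaL νs τs n = P.thetaL νs τs' n

/-- The trace width `W(P)`. -/
def traceWidth (P : PreProof S) : ℕ :=
  Finset.univ.sup fun ν : P.Node =>
    max (S.tvA (P.seqOf ν).1).card (S.tvC (P.seqOf ν).2).card

/-- The (binary left-hand) cycle threshold `C(P)`: the number of triples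
`(σ, σ', μ)` with `σ, σ' ∈ TraceVals_A(μ)`. -/
def cycThreshold (P : PreProof S) : ℕ :=
  ∑ ν : P.Node, (S.tvA (P.seqOf ν).1).card * (S.tvA (P.seqOf ν).1).card

/-- `maxStep(P)`: the maximum (finite) `δ1`-value over the edges of `P`. -/
def maxStepN (P : PreProof S) : ℕ :=
  sSup {k : ℕ | ∃ ν ν' τ τ', P.δ1 ν ν' τ τ' = some (k : Ordl)}

/-- The in-degree of the proof graph. -/
def inDeg (P : PreProof S) : ℕ :=
  Finset.univ.sup fun ν' : P.Node =>
    (Finset.univ.filter fun ν : P.Node => ν' ∈ P.children ν).card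

/-- The trace pair function of `P` is trace injective. -/
def TraceInjective (P : PreProof S) : Prop :=
  (∀ (ν ν' : P.Node) (τ τ' τ'' : S.TA),
    (P.δ1 ν ν' τ τ'').isSome → (P.δ1 ν ν' τ' τ'').isSome → τ = τ') ∧
  (∀ (ν ν' : P.Node) (σ σ' σ'' : S.TC),
    (P.δ2 ν ν' σ σ'').isSome → (P.δ2 ν ν' σ' σ'').isSome → σ = σ')

/-- `T_ν(σ)`: the set of antecedent trace values of `ν` equated to `σ`
by the sequent of `ν`. -/
def Tset (P : PreProof S) (O : OTF S) (ν : P.Node) (σ : S.TC) : Set S.TA :=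
  {τ : S.TA | τ ∈ S.tvA (P.seqOf ν).1 ∧ O.Equates (P.seqOf ν) τ σ}

end PreProof

/-! ### Weighted automata over the ordinal max-plus semiring -/

/-- The alphabet `Σ_P`. -/
abbrev Sig {S : CES} (P : PreProof S) : Type := P.Node ⊕ (Set S.TA × S.TC)

/-- States of the antecedent automata (`⊤ⁱ_μ` states are used only by the
approximate automata). -/
inductive AState (Node TA : Type) : Type
  | init : AState Node TA
  | pair : Node → TA → AState Node TA
  | bot : AState Node TA
  | top : AState Node TA
  | topn : Node → ℕ → AState Node TA

instance {Node TA : Type} : Inhabited (AState Node TA) := ⟨AState.init⟩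

/-- States of the consequent automaton. -/
inductive BState (Node TC : Type) : Type
  | init : BState Node TC
  | pair : Node → TC → BState Node TC
  | bot : BState Node TC

instance {Node TC : Type} : Inhabited (BState Node TC) := ⟨BState.init⟩

/-- Transition relation of the (full) antecedent automaton `𝒜^{(P,ν0)}_{(τ1,·)}`. -/
inductive ATrans {S : CES} (P : PreProof S) (O : OTF S) (ν0 : P.Node) (τ1 : S.TA) :
    AState P.Node S.TA → Sig P → AState P.Node S.TA → Prop
  | start : ATrans P O ν0 τ1 .init (Sum.inl ν0) (.pair ν0 τ1)
  | step {μ μ' : P.Node} {σ σ' : S.TA} (h1 : μ' ∈ P.children μ)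
      (h2 : (P.δ1 μ μ' σ σ').isSome) :
      ATrans P O ν0 τ1 (.pair μ σ) (Sum.inl μ') (.pair μ' σ')
  | toBot {μ : P.Node} {σ : S.TA} {σ' : S.TC} (h1 : P.Axiomatic μ)
      (h2 : σ' ∈ S.tvC (P.seqOf μ).2) (h3 : σ ∈ P.Tset O μ σ') :
      ATrans P O ν0 τ1 (.pair μ σ) (Sum.inr (P.Tset O μ σ', σ')) .bot
  | toTop {μ μ' : P.Node} {σ : S.TA} (h : μ' ∈ P.children μ) :
      ATrans P O ν0 τ1 (.pair μ σ) (Sum.inl μ') .top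
  | topLoop (μ : P.Node) : ATrans P O ν0 τ1 .top (Sum.inl μ) .top

/-- Transition relation of the approximate antecedent automaton `𝒜(n)^{(P,ν0)}_{(τ1,·)}`. -/
inductive ATransN {S : CES} (P : PreProof S) (O : OTF S) (n : ℕ) (ν0 : P.Node) (τ1 : S.TA) :
    AState P.Node S.TA → Sig P → AState P.Node S.TA → Prop
  | start : ATransN P O n ν0 τ1 .init (Sum.inl ν0) (.pair ν0 τ1)
  | step {μ μ' : P.Node} {σ σ' : S.TA} (h1 : μ' ∈ P.children μ)
      (h2 : (P.δ1 μ μ' σ σ').isSome) :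
      ATransN P O n ν0 τ1 (.pair μ σ) (Sum.inl μ') (.pair μ' σ')
  | toBot {μ : P.Node} {σ : S.TA} {σ' : S.TC} (h1 : P.Axiomatic μ)
      (h2 : σ' ∈ S.tvC (P.seqOf μ).2) (h3 : σ ∈ P.Tset O μ σ') :
      ATransN P O n ν0 τ1 (.pair μ σ) (Sum.inr (P.Tset O μ σ', σ')) .bot
  | toTopn {μ μ' : P.Node} {σ : S.TA} (h : μ' ∈ P.children μ) :
      ATransN P O n ν0 τ1 (.pair μ σ) (Sum.inl μ') (.topn μ' 1)
  | topnStay {μ μ' : P.Node} {i : ℕ} (h1 : 0 < i) (h2 : i ≤ n) (h3 : μ' ≠ μ) :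
      ATransN P O n ν0 τ1 (.topn μ i) (Sum.inl μ') (.topn μ i)
  | topnStep {μ : P.Node} {i : ℕ} (h1 : 0 < i) (h2 : i < n) :
      ATransN P O n ν0 τ1 (.topn μ i) (Sum.inl μ) (.topn μ (i + 1))

/-- Transition relation of the consequent automaton `ℬ^{(P,ν0)}_{(·,τ2)}`. -/
inductive BTrans {S : CES} (P : PreProof S) (O : OTF S) (Excl : P.Node → S.TC → Prop)
    (ν0 : P.Node) (τ2 : S.TC) :
    BState P.Node S.TC → Sig P → BState P.Node S.TC → Prop
  | start : BTrans P O Excl ν0 τ2 .init (Sum.inl ν0) (.pair ν0 τ2)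
  | step {μ μ' : P.Node} {σ σ' : S.TC} (h1 : μ' ∈ P.children μ)
      (h2 : (P.δ2 μ μ' σ σ').isSome) :
      BTrans P O Excl ν0 τ2 (.pair μ σ) (Sum.inl μ') (.pair μ' σ')
  | toBot {μ : P.Node} {σ : S.TC} (h1 : P.Axiomatic μ) (h2 : σ ∈ S.tvC (P.seqOf μ).2)
      (h3 : ¬ P.Ground O μ σ) (h4 : ¬ Excl μ σ) :
      BTrans P O Excl ν0 τ2 (.pair μ σ) (Sum.inr (P.Tset O μ σ, σ)) .bot

/-- Weight function of the antecedent automata (the only potentially non-zero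
weights sit on pair-to-pair transitions, where they are given by `δ1`). -/
def Awt {S : CES} (P : PreProof S) :
    AState P.Node S.TA → Sig P → AState P.Node S.TA → Ordl
  | .pair μ σ, _, .pair μ' σ' => (P.δ1 μ μ' σ σ').getD 0
  | _, _, _ => 0

/-- Weight function of the consequent automaton. -/
def Bwt {S : CES} (P : PreProof S) :
    BState P.Node S.TC → Sig P → BState P.Node S.TC → Ordl
  | .pair μ σ, _, .pair μ' σ' => (P.δ2 μ μ' σ σ').getD 0
  | _, _, _ => 0

/-- `q` is a run over the word `σ 0, …, σ (m-1)` (from the initial state `q0`). -/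
def IsRun {Q A : Type*} (T : Q → A → Q → Prop) (q0 : Q) (m : ℕ) (σ : ℕ → A)
    (q : ℕ → Q) : Prop :=
  q 0 = q0 ∧ ∀ i < m, T (q i) (σ i) (q (i + 1))

/-- The value of a run: the `⊗`-product (i.e. reverse ordinal sum) of the
weights of its transitions. -/
def runVal {Q A : Type*} (wt : Q → A → Q → Ordl) (m : ℕ) (σ : ℕ → A) (q : ℕ → Q) : Ordl :=
  revSum (fun i => wt (q i) (σ i) (q (i + 1))) m

/-- The quantitative language of a weighted automaton: `⊥` (i.e. `none`) if the
word admits no accepting run, and otherwise the supremum (maximum) of the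
values of its accepting runs. -/
def Lang {Q A : Type*} (T : Q → A → Q → Prop) (q0 : Q) (F : Q → Prop)
    (wt : Q → A → Q → Ordl) (m : ℕ) (σ : ℕ → A) : Option Ordl := by
  classical
  exact if (∃ q : ℕ → Q, IsRun T q0 m σ q ∧ F (q m)) then
    some (sSup {v : Ordl | ∃ q : ℕ → Q, IsRun T q0 m σ q ∧ F (q m) ∧ v = runVal wt m σ q})
  else none

/-- Ordering of quantitative language values, with `⊥ = none` below everything. -/
def OptLE : Option Ordl → Option Ordl → Prop
  | none, _ => True
  | some _, none => False
  | some a, some b => a ≤ b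

/-- Strict ordering of quantitative language values on defined (non-`⊥`) values. -/
def OptLT : Option Ordl → Option Ordl → Prop
  | none, _ => True
  | some _, none => False
  | some a, some b => a < b

/-- `∼` on language values: `<` when `strict`, else `≤`. -/
def OptOrd (strict : Bool) : Option Ordl → Option Ordl → Prop :=
  fun x y => if strict then OptLT x y else OptLE x y

/-- Final states of the antecedent automata: all non-initial states. -/
def AFinal {Node TA : Type} : AState Node TA → Prop := fun q => q ≠ .init

/-- Final states of the consequent automaton. -/
def BFinal {S : CES} (P : PreProof S) (O : OTF S) (Excl : P.Node → S.TC → Prop) :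
    BState P.Node S.TC → Prop
  | .init => False
  | .bot => True
  | .pair μ σ => ¬ Excl μ σ ∧
      ((¬ P.Axiomatic μ ∧ P.TerminalR μ σ) ∨ (P.Axiomatic μ ∧ P.Ground O μ σ))

/-- The quantitative language of `𝒜^{(P,ν0)}_{(τ1,τ2)}` (it does not depend on `τ2`). -/
def LangA {S : CES} (P : PreProof S) (O : OTF S) (ν0 : P.Node) (τ1 : S.TA) :
    ℕ → (ℕ → Sig P) → Option Ordl :=
  Lang (ATrans P O ν0 τ1) .init AFinal (Awt P)

/-- The quantitative language of `𝒜(n)^{(P,ν0)}_{(τ1,τ2)}`. -/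
def LangAN {S : CES} (P : PreProof S) (O : OTF S) (n : ℕ) (ν0 : P.Node) (τ1 : S.TA) :
    ℕ → (ℕ → Sig P) → Option Ordl :=
  Lang (ATransN P O n ν0 τ1) .init AFinal (Awt P)

/-- The quantitative language of `ℬ^{(P,ν0)}_{(τ1,τ2)}` (it does not depend on `τ1`). -/
def LangB {S : CES} (P : PreProof S) (O : OTF S) (Excl : P.Node → S.TC → Prop)
    (ν0 : P.Node) (τ2 : S.TC) : ℕ → (ℕ → Sig P) → Option Ordl :=
  Lang (BTrans P O Excl ν0 τ2) .init (BFinal P O Excl) (Bwt P)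

/-- The automaton `ℬ^{(P,ν0)}_{(·,τ2)}` is grounded: every reachable final pair
state carries a trace value that is ground w.r.t. its node. -/
def BGrounded {S : CES} (P : PreProof S) (O : OTF S) (Excl : P.Node → S.TC → Prop)
    (ν0 : P.Node) (τ2 : S.TC) : Prop :=
  ∀ (μ : P.Node) (σ : S.TC),
    (∃ (m : ℕ) (w : ℕ → Sig P) (q : ℕ → BState P.Node S.TC),
      IsRun (BTrans P O Excl ν0 τ2) .init m w q ∧ q m = .pair μ σ ∧
        BFinal P O Excl (.pair μ σ)) →
    P.Ground O μ σ

/-- Collapse the graded sink states of an approximate automaton onto `⊤`. -/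
def collapseTop {Node TA : Type} : AState Node TA → AState Node TA
  | .topn _ _ => .top
  | q => q

/-- The number of occurrences of the letter `a` among `σ lo, …, σ (hi - 1)`. -/
def cnt {A : Type*} (σ : ℕ → A) (a : A) (lo hi : ℕ) : ℕ := by
  classical
  exact ((Finset.Ico lo hi).filter fun t => σ t = a).card

/-- The set of runs (as lists of states) of an automaton on a word. -/
def RunsOn {Q A : Type*} [Inhabited Q] (T : Q → A → Q → Prop) (q0 : Q)
    (w : List A) : Set (List Q) :=
  {l : List Q | l.length = w.length + 1 ∧ l.getD 0 default = q0 ∧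
    ∀ i, ∀ h : i < w.length, T (l.getD i default) (w.get ⟨i, h⟩) (l.getD (i + 1) default)}

end

/-- **Soundness of Cyclic Proof Systems.**
Given a cyclic entailment system with an ordinal trace function satisfying the
descending counter-model property, if `P` is a valid cyclic proof (every
infinite path has a tail followed by an infinitely progressing left-hand
trace) of the sequent `Sq` (i.e. `Sq` labels a node `root` of `P`), then `Sq`
is valid. -/
theorem soundness_of_cyclic_proof_systems
    (S : CES) (P : PreProof S) (O : OTF S)
    (hdcm : P.DCM O) (hglobal : P.GlobalSound)
    (root : P.Node) (Sq : S.A × S.C) (hroot : P.seqOf root = Sq) :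
    S.Valid Sq := by
  subst hroot
  intro m hm
  by_contra hc
  let T := {p : P.Node × S.M // S.satA p.2 (P.seqOf p.1).1 ∧ ¬ S.satC p.2 (P.seqOf p.1).2}
  have step : ∀ p : T, ∃ q : T, q.1.1 ∈ P.children p.1.1 ∧
      ∀ (τ τ' : S.TA) (α : Ordl), P.δ1 p.1.1 q.1.1 τ τ' = some α →
        ∀ o : Ordl, O.OA τ p.1.2 = some o →
          ∃ o' : Ordl, O.OA τ' q.1.2 = some o' ∧ o' + α ≤ o := by
    rintro ⟨⟨ν, m⟩, h1, h2⟩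
    obtain ⟨ν', hν', m', h1', h2', h⟩ := hdcm ν m h1 h2
    exact ⟨⟨(ν', m'), h1', h2'⟩, hν', h⟩
  choose f hf1 hf2 using step
  let p : ℕ → T := fun n => f^[n] ⟨(root, m), hm, hc⟩
  have hp : ∀ n, p (n + 1) = f (p n) := fun n => Function.iterate_succ_apply' f n _
  obtain ⟨k, τs, hs, hprog⟩ := hglobal (fun n => (p n).1.1)
    (fun i => by simp only [hp]; exact hf1 _)
  have hdef : ∀ i, ∃ o, O.OA (τs i) (p (k + i)).1.2 = some o := by
    intro i
    have h := P.δ1_dom _ _ _ _ (hs i)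
    exact Option.isSome_iff_exists.1 (O.definedA _ _ _ h.2.1 (p (k + i)).2.1)
  choose o ho using hdef
  have hdesc : ∀ i α, P.δ1 (p (k + i)).1.1 (p (k + i + 1)).1.1 (τs i) (τs (i + 1)) = some α →
      o (i + 1) + α ≤ o i := by
    intro i α hα
    rw [hp] at hα
    obtain ⟨o', h1, h2⟩ := hf2 (p (k + i)) _ _ α hα _ (ho i)
    have h3 := ho (i + 1)
    rw [← add_assoc, hp, h1] at h3
    cases h3
    exact h2
  have hanti : Antitone o := by
    refine antitone_nat_of_succ_le fun i => ?_
    obtain ⟨α, hα⟩ := Option.isSome_iff_exists.1 (hs i)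
    exact le_self_add.trans (hdesc i α hα)
  obtain ⟨_, ⟨n, rfl⟩, hn⟩ := (wellFounded_lt (α := Ordl)).has_min (Set.range o) ⟨_, 0, rfl⟩
  obtain ⟨i, hi, α, hα, hpos⟩ := hprog n
  refine hn (o (i + 1)) ⟨_, rfl⟩ ?_
  exact (lt_add_of_pos_right _ hpos).trans_le ((hdesc i α hα).trans (hanti hi))
end

section
/- Soundness and Completeness of the Automata Construction: Let P be a cyclic proof, ν a node of P, τ_𝒜 ∈ TraceVals_𝒜(ν) and τ_𝒞 ∈ TraceVals_𝒞(ν), and ∼ ∈ {<, ≤}. Then τ_𝒞 ∼^ν_P τ_𝒜 holds if and only if L_{ℬ^{(P,ν)}_{(τ_𝒜,τ_𝒞)}} ∼ L_{𝒜^{(P,ν)}_{(τ_𝒜,τ_𝒞)}} and the automaton ℬ^{(P,ν)}_{(τ_𝒜,τ_𝒞)} is grounded. -/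
theorem revSum_congr' {d e : ℕ → Ordl} {n : ℕ} (h : ∀ i < n, d i = e i) :
    revSum d n = revSum e n := by
  induction n with
  | zero => rfl
  | succ n ih =>
    simp only [revSum]
    rw [h n (by omega), ih (fun i hi => h i (by omega))]

theorem revSum_tail {d : ℕ → Ordl} {k n : ℕ} (hk : k ≤ n) (h : ∀ i, k ≤ i → i < n → d i = 0) :
    revSum d n = revSum d k := by
  induction n, hk using Nat.le_induction with
  | base => rfl
  | succ n hn ih =>
    simp only [revSum]
    rw [h n hn (by omega), zero_add, ih (fun i h1 h2 => h i h1 (by omega))]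

theorem revSum_shift {d : ℕ → Ordl} (h : d 0 = 0) (k : ℕ) :
    revSum d (k + 1) = revSum (fun i => d (i + 1)) k := by
  induction k with
  | zero => simp [revSum, h]
  | succ k ih => rw [revSum, ih]; rfl

theorem revSum_run {d e : ℕ → Ordl} {k n : ℕ} (hk1 : 1 ≤ k) (hk : k ≤ n) (h0 : d 0 = 0)
    (h1 : ∀ i, i + 1 < k → d (i + 1) = e i) (h : ∀ i, k ≤ i → i < n → d i = 0) :
    revSum d n = revSum e (k - 1) := by
  rw [revSum_tail hk h]
  obtain ⟨k, rfl⟩ : ∃ j, k = j + 1 := ⟨k - 1, by omega⟩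
  rw [revSum_shift h0]
  exact revSum_congr' (fun i hi => h1 i (by omega))

theorem runs_finite {Q A : Type*} (T : Q → A → Q → Prop) (q0 : Q) (wt : Q → A → Q → Ordl)
    (hT : ∀ q a, {q' | T q a q'}.Finite) (σ : ℕ → A) (m : ℕ) :
    {p : Q × Ordl | ∃ q, IsRun T q0 m σ q ∧ p = (q m, runVal wt m σ q)}.Finite := by
  induction m with
  | zero =>
    refine (Set.finite_singleton (q0, (0 : Ordl))).subset ?_
    rintro p ⟨q, hq, rfl⟩
    simp [runVal, revSum, hq.1]
  | succ m ih =>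
    refine (ih.biUnion (t := fun p => (fun q' => (q', wt p.1 (σ m) q' + p.2)) ''
      {q' | T p.1 (σ m) q'}) (fun p _ => (hT _ _).image _)).subset ?_
    rintro p ⟨q, hq, rfl⟩
    simp only [Set.mem_iUnion]
    refine ⟨(q m, runVal wt m σ q), ⟨q, ⟨hq.1, fun i hi => hq.2 i (by omega)⟩, rfl⟩, ?_⟩
    exact ⟨q (m + 1), hq.2 m (by omega), rfl⟩

theorem vals_finite {Q A : Type*} (T : Q → A → Q → Prop) (q0 : Q) (F : Q → Prop)
    (wt : Q → A → Q → Ordl)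
    (hT : ∀ q a, {q' | T q a q'}.Finite) (σ : ℕ → A) (m : ℕ) :
    {v : Ordl | ∃ q : ℕ → Q, IsRun T q0 m σ q ∧ F (q m) ∧ v = runVal wt m σ q}.Finite := by
  refine ((runs_finite T q0 wt hT σ m).image Prod.snd).subset ?_
  rintro v ⟨q, h1, _, rfl⟩
  exact ⟨_, ⟨q, h1, rfl⟩, rfl⟩

theorem lang_ord {Q Q' A : Type*} (T : Q → A → Q → Prop) (q0 : Q) (F : Q → Prop)
    (wt : Q → A → Q → Ordl) (T' : Q' → A → Q' → Prop) (q0' : Q') (F' : Q' → Prop)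
    (wt' : Q' → A → Q' → Ordl)
    (hT : ∀ q a, {q' | T q a q'}.Finite) (hT' : ∀ q a, {q' | T' q a q'}.Finite)
    (strict : Bool) (m : ℕ) (w : ℕ → A) :
    OptOrd strict (Lang T q0 F wt m w) (Lang T' q0' F' wt' m w) ↔
      ∀ q, IsRun T q0 m w q → F (q m) → ∃ q', IsRun T' q0' m w q' ∧ F' (q' m) ∧
        (if strict then runVal wt m w q < runVal wt' m w q'
          else runVal wt m w q ≤ runVal wt' m w q') := by
  have f1 := vals_finite T q0 F wt hT w m
  have f2 := vals_finite T' q0' F' wt' hT' w m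
  by_cases h1 : ∃ q : ℕ → Q, IsRun T q0 m w q ∧ F (q m)
  · have n1 : {v : Ordl | ∃ q : ℕ → Q, IsRun T q0 m w q ∧ F (q m) ∧
        v = runVal wt m w q}.Nonempty := by
      obtain ⟨q, a, b⟩ := h1
      exact ⟨_, q, a, b, rfl⟩
    by_cases h2 : ∃ q : ℕ → Q', IsRun T' q0' m w q ∧ F' (q m)
    · have n2 : {v : Ordl | ∃ q : ℕ → Q', IsRun T' q0' m w q ∧ F' (q m) ∧
          v = runVal wt' m w q}.Nonempty := by
        obtain ⟨q, a, b⟩ := h2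
        exact ⟨_, q, a, b, rfl⟩
      obtain ⟨q1, a1, b1, c1⟩ := n1.csSup_mem f1
      obtain ⟨q2, a2, b2, c2⟩ := n2.csSup_mem f2
      have L1 : Lang T q0 F wt m w = some (runVal wt m w q1) := by
        rw [← c1]; unfold Lang; rw [if_pos h1]
      have L2 : Lang T' q0' F' wt' m w = some (runVal wt' m w q2) := by
        rw [← c2]; unfold Lang; rw [if_pos h2]
      have u1 : ∀ q, IsRun T q0 m w q → F (q m) → runVal wt m w q ≤ runVal wt m w q1 := by
        intro q a b
        rw [← c1]
        exact le_csSup f1.bddAbove ⟨q, a, b, rfl⟩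
      have u2 : ∀ q, IsRun T' q0' m w q → F' (q m) →
          runVal wt' m w q ≤ runVal wt' m w q2 := by
        intro q a b
        rw [← c2]
        exact le_csSup f2.bddAbove ⟨q, a, b, rfl⟩
      rw [L1, L2]
      cases strict
      · simp only [OptOrd, OptLE, Bool.false_eq_true, if_false]
        constructor
        · intro h q a b
          exact ⟨q2, a2, b2, (u1 q a b).trans h⟩
        · intro h
          obtain ⟨q', a, b, c⟩ := h q1 a1 b1
          exact c.trans (u2 q' a b)
      · simp only [OptOrd, OptLT, if_true]
        constructor
        · intro h q a b
          exact ⟨q2, a2, b2, (u1 q a b).trans_lt h⟩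
        · intro h
          obtain ⟨q', a, b, c⟩ := h q1 a1 b1
          exact c.trans_le (u2 q' a b)
    · have L1 : Lang T q0 F wt m w = some (sSup {v : Ordl | ∃ q : ℕ → Q, IsRun T q0 m w q ∧
          F (q m) ∧ v = runVal wt m w q}) := by
        unfold Lang; rw [if_pos h1]
      have L2 : Lang T' q0' F' wt' m w = none := by
        unfold Lang; rw [if_neg h2]
      rw [L1, L2]
      constructor
      · intro h
        cases strict <;> simp [OptOrd, OptLE, OptLT] at h
      · intro h
        obtain ⟨q, a, b⟩ := h1
        obtain ⟨q', a', b', _⟩ := h q a b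
        exact absurd ⟨q', a', b'⟩ h2
  · have L1 : Lang T q0 F wt m w = none := by
      unfold Lang; rw [if_neg h1]
    rw [L1]
    constructor
    · intro _ q a b
      exact absurd ⟨q, a, b⟩ h1
    · intro _
      cases strict <;> simp [OptOrd, OptLE, OptLT]

section
variable {S : CES} (P : PreProof S) (O : OTF S) (Excl : P.Node → S.TC → Prop)

theorem atrans_fin (ν0 : P.Node) (τ1 : S.TA) (q : AState P.Node S.TA) (a : Sig P) :
    {q' | ATrans P O ν0 τ1 q a q'}.Finite := by
  have h : ({.pair ν0 τ1, .bot, .top} ∪ ⋃ μ : P.Node, (fun σ => AState.pair μ σ) ''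
      (S.tvA (P.seqOf μ).1 : Set S.TA) : Set (AState P.Node S.TA)).Finite :=
    (Set.toFinite _).union (Set.finite_iUnion fun μ => (Finset.finite_toSet _).image _)
  refine h.subset ?_
  intro q' hq
  cases hq with
  | start => simp
  | step h1 h2 =>
    right
    simp only [Set.mem_iUnion]
    exact ⟨_, _, (P.δ1_dom _ _ _ _ h2).2.2, rfl⟩
  | toBot => simp
  | toTop => simp
  | topLoop => simp

theorem btrans_fin (ν0 : P.Node) (τ2 : S.TC) (q : BState P.Node S.TC) (a : Sig P) :
    {q' | BTrans P O Excl ν0 τ2 q a q'}.Finite := by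
  have h : ({.pair ν0 τ2, .bot} ∪ ⋃ μ : P.Node, (fun σ => BState.pair μ σ) ''
      (S.tvC (P.seqOf μ).2 : Set S.TC) : Set (BState P.Node S.TC)).Finite :=
    (Set.toFinite _).union (Set.finite_iUnion fun μ => (Finset.finite_toSet _).image _)
  refine h.subset ?_
  intro q' hq
  cases hq with
  | start => simp
  | step h1 h2 =>
    right
    simp only [Set.mem_iUnion]
    exact ⟨_, _, (P.δ2_dom _ _ _ _ h2).2.2, rfl⟩
  | toBot => simp

theorem Awt_nonpair {q q' : AState P.Node S.TA} {a : Sig P} (h : ∀ μ σ, q' ≠ .pair μ σ) :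
    Awt P q a q' = 0 := by
  cases q' with
  | pair μ σ => exact absurd rfl (h μ σ)
  | _ => cases q <;> rfl

theorem Bwt_nonpair {q q' : BState P.Node S.TC} {a : Sig P} (h : ∀ μ σ, q' ≠ .pair μ σ) :
    Bwt P q a q' = 0 := by
  cases q' with
  | pair μ σ => exact absurd rfl (h μ σ)
  | _ => cases q <;> rfl

theorem A_val {q : ℕ → AState P.Node S.TA} {w : ℕ → Sig P} {νs : ℕ → P.Node} {τs : ℕ → S.TA}
    {k m : ℕ} (hk : 1 ≤ k) (hkm : k ≤ m) (h0 : q 0 = .init)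
    (h1 : ∀ i < k, q (i + 1) = .pair (νs i) (τs i))
    (h2 : ∀ i, k ≤ i → i < m → ∀ μ σ, q (i + 1) ≠ .pair μ σ) :
    runVal (Awt P) m w q = P.thetaL νs τs k := by
  refine revSum_run hk hkm ?_ ?_ ?_
  · simp only [h0, Awt]
  · intro i hi
    simp only [h1 i (by omega), h1 (i + 1) hi, Awt, PreProof.stepL]
  · intro i hi hi'
    exact Awt_nonpair P (h2 i hi hi')

theorem B_val {q : ℕ → BState P.Node S.TC} {w : ℕ → Sig P} {νs : ℕ → P.Node} {τs : ℕ → S.TC}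
    {k m : ℕ} (hk : 1 ≤ k) (hkm : k ≤ m) (h0 : q 0 = .init)
    (h1 : ∀ i < k, q (i + 1) = .pair (νs i) (τs i))
    (h2 : ∀ i, k ≤ i → i < m → ∀ μ σ, q (i + 1) ≠ .pair μ σ) :
    runVal (Bwt P) m w q = P.thetaR νs τs k := by
  refine revSum_run hk hkm ?_ ?_ ?_
  · simp only [h0, Bwt]
  · intro i hi
    simp only [h1 i (by omega), h1 (i + 1) hi, Bwt, PreProof.stepR]
  · intro i hi hi'
    exact Bwt_nonpair P (h2 i hi hi')

theorem B_shape {ν0 : P.Node} {τ2 : S.TC} {w : ℕ → Sig P} {q : ℕ → BState P.Node S.TC}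
    (n : ℕ) : ∀ μ σ, IsRun (BTrans P O Excl ν0 τ2) .init n w q → q n = .pair μ σ →
    1 ≤ n ∧ ∀ i < n, ∃ μ σ, w i = Sum.inl μ ∧ q (i + 1) = .pair μ σ := by
  induction n with
  | zero =>
    intro μ σ h h'
    rw [h.1] at h'
    cases h'
  | succ n ih =>
    intro μ σ h h'
    refine ⟨by omega, ?_⟩
    have ht := h.2 n (by omega)
    have hr : IsRun (BTrans P O Excl ν0 τ2) .init n w q := ⟨h.1, fun i hi => h.2 i (by omega)⟩
    rw [h'] at ht
    generalize hw : w n = a at ht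
    generalize hq : q n = s at ht
    have hlast : w n = Sum.inl μ := by
      rw [hw]; cases ht <;> rfl
    intro i hi
    rcases Nat.lt_succ_iff_lt_or_eq.1 hi with hi | rfl
    · cases ht with
      | start =>
        cases n with
        | zero => omega
        | succ n =>
          exfalso
          have := h.2 n (by omega)
          rw [hq] at this
          generalize q n = s at this; generalize w n = a at this; cases this
      | step h1 h2 => exact (ih _ _ hr hq).2 i hi
    · exact ⟨μ, σ, hlast, h'⟩

theorem B_trace {ν0 : P.Node} {τ2 : S.TC} (hτ : τ2 ∈ S.tvC (P.seqOf ν0).2)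
    {w : ℕ → Sig P} {q : ℕ → BState P.Node S.TC}
    {n : ℕ} {μ σ} (h : IsRun (BTrans P O Excl ν0 τ2) .init n w q) (hn : q n = .pair μ σ) :
    1 ≤ n ∧ ∃ νs τs, (∀ i < n, w i = Sum.inl (νs i) ∧ q (i + 1) = .pair (νs i) (τs i)) ∧
      P.IsPath n νs ∧ νs 0 = ν0 ∧ τs 0 = τ2 ∧ P.FollowsR n νs n τs ∧ νs (n - 1) = μ ∧
      τs (n - 1) = σ := by
  obtain ⟨h1, hs⟩ := B_shape P O Excl n μ σ h hn
  refine ⟨h1, ?_⟩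
  have hs' : ∀ i, ∃ μ σ, i < n → w i = Sum.inl μ ∧ q (i + 1) = .pair μ σ := by
    intro i
    by_cases hi : i < n
    · obtain ⟨a, b, c⟩ := hs i hi
      exact ⟨a, b, fun _ => c⟩
    · exact ⟨ν0, τ2, fun h => absurd h hi⟩
  choose νs τs hq using hs'
  have hstep : ∀ i, i + 1 < n →
      (P.δ2 (νs i) (νs (i + 1)) (τs i) (τs (i + 1))).isSome := by
    intro i hi
    have := h.2 (i + 1) hi
    rw [(hq i (by omega)).2, (hq (i + 1) hi).2, (hq (i + 1) hi).1] at this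
    cases this with
    | step _ h2 => exact h2
  have h00 : νs 0 = ν0 ∧ τs 0 = τ2 := by
    have := h.2 0 (by omega)
    rw [h.1, (hq 0 (by omega)).1, (hq 0 (by omega)).2] at this
    generalize νs 0 = a at this
    generalize τs 0 = b at this
    cases this
    exact ⟨rfl, rfl⟩
  have hl := (hq (n - 1) (by omega)).2
  rw [show n - 1 + 1 = n by omega, hn] at hl
  injection hl with e1 e2
  refine ⟨νs, τs, hq, fun i hi => (P.δ2_dom _ _ _ _ (hstep i hi)).1, h00.1, h00.2,
    ⟨le_rfl, ?_, hstep⟩, e1.symm, e2.symm⟩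
  intro i hi
  cases i with
  | zero => rw [h00.1, h00.2]; exact hτ
  | succ i => exact (P.δ2_dom _ _ _ _ (hstep i hi)).2.2

theorem A_shape {ν0 : P.Node} {τ1 : S.TA} {w : ℕ → Sig P} {q : ℕ → AState P.Node S.TA}
    {νs : ℕ → P.Node} (hτ : τ1 ∈ S.tvA (P.seqOf ν0).1)
    (n : ℕ) (h1 : 1 ≤ n) : IsRun (ATrans P O ν0 τ1) .init n w q →
    (∀ i < n, w i = Sum.inl (νs i)) →
    ∃ k τs, 1 ≤ k ∧ k ≤ n ∧ τs 0 = τ1 ∧ P.FollowsL n νs k τs ∧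
      (∀ i < k, q (i + 1) = .pair (νs i) (τs i)) ∧
      ∀ i, k ≤ i → i < n → q (i + 1) = .top := by
  induction n, h1 using Nat.le_induction with
  | base =>
    intro h hw
    have ht := h.2 0 (by omega)
    rw [h.1, hw 0 (by omega)] at ht
    generalize hq : q (0 + 1) = s at ht
    generalize hν : νs 0 = a at ht
    cases ht
    refine ⟨1, fun _ => τ1, le_rfl, le_rfl, rfl, ⟨le_rfl, ?_, ?_⟩, ?_, ?_⟩
    · intro i hi
      obtain rfl : i = 0 := by omega
      rw [hν]; exact hτ
    · intro i hi; omega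
    · intro i hi
      obtain rfl : i = 0 := by omega
      rw [hν]; exact hq
    · intro i hi hi'; omega
  | succ n hn ih =>
    intro h hw
    obtain ⟨k, τs, k1, kn, t0, hf, hp, ht⟩ :=
      ih ⟨h.1, fun i hi => h.2 i (by omega)⟩ (fun i hi => hw i (by omega))
    have hl := h.2 n (by omega)
    rw [hw n (by omega)] at hl
    have topcase : q (n + 1) = .top → ∃ k τs, 1 ≤ k ∧ k ≤ n + 1 ∧ τs 0 = τ1 ∧
        P.FollowsL (n + 1) νs k τs ∧ (∀ i < k, q (i + 1) = .pair (νs i) (τs i)) ∧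
        ∀ i, k ≤ i → i < n + 1 → q (i + 1) = .top := by
      intro hq
      refine ⟨k, τs, k1, by omega, t0, ⟨by omega, hf.2.1, hf.2.2⟩, hp, ?_⟩
      intro i hi hi'
      rcases Nat.lt_succ_iff_lt_or_eq.1 hi' with hi' | rfl
      · exact ht i hi hi'
      · exact hq
    rcases Nat.lt_or_eq_of_le kn with hkn | rfl
    · have := ht (n - 1) (by omega) (by omega)
      rw [show n - 1 + 1 = n by omega] at this
      rw [this] at hl
      generalize hq : q (n + 1) = s at hl
      cases hl
      exact topcase hq
    · have := hp (k - 1) (by omega)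
      rw [show k - 1 + 1 = k by omega] at this
      rw [this] at hl
      generalize hq : q (k + 1) = s at hl
      generalize hν : νs k = a at hl
      cases hl with
      | toTop => exact topcase hq
      | @step _ _ _ σ' g1 g2 =>
        refine ⟨k + 1, fun i => if i < k then τs i else σ', by omega, le_rfl, ?_,
          ⟨le_rfl, ?_, ?_⟩, ?_, ?_⟩
        · simp only; rw [if_pos (by omega)]; exact t0
        · intro i hi
          rcases Nat.lt_succ_iff_lt_or_eq.1 hi with hi | rfl
          · simp only [hi, if_true]; exact hf.2.1 i hi
          · simp only [lt_irrefl, if_false, hν]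
            exact (P.δ1_dom _ _ _ _ g2).2.2
        · intro i hi
          have hi0 : i < k := by omega
          simp only [hi0, if_true]
          by_cases hi1 : i + 1 < k
          · simp only [hi1, if_true]; exact hf.2.2 i hi1
          · have : i + 1 = k := by omega
            simp only [hi1, if_false]
            have e : k - 1 = i := by omega
            rw [e] at g2
            rw [this, hν]; exact g2
        · intro i hi
          rcases Nat.lt_succ_iff_lt_or_eq.1 hi with hi | rfl
          · simp only [hi, if_true]; exact hp i hi
          · simp only [lt_irrefl, if_false, hν]; exact hq
        · intro i hi hi'; omega

/-- canonical run of the antecedent automaton -/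
def qA (νs : ℕ → P.Node) (τs : ℕ → S.TA) (k : ℕ) (e : AState P.Node S.TA) :
    ℕ → AState P.Node S.TA
  | 0 => .init
  | i + 1 => if i < k then .pair (νs i) (τs i) else e

/-- canonical run of the consequent automaton -/
def qB (νs : ℕ → P.Node) (τs : ℕ → S.TC) (k : ℕ) : ℕ → BState P.Node S.TC
  | 0 => .init
  | i + 1 => if i < k then .pair (νs i) (τs i) else .bot

theorem qA_run {ν0 : P.Node} {τ1 : S.TA} {w : ℕ → Sig P} {νs : ℕ → P.Node} {τs : ℕ → S.TA}
    {n k : ℕ} {e : AState P.Node S.TA} (hp : P.IsPath n νs) (h0 : νs 0 = ν0) (ht : τs 0 = τ1)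
    (hk : 1 ≤ k) (hf : P.FollowsL n νs k τs) (hw : ∀ i < n, w i = Sum.inl (νs i))
    (he : k < n → e = .top) :
    IsRun (ATrans P O ν0 τ1) .init n w (qA P νs τs k e) := by
  refine ⟨rfl, ?_⟩
  intro i hi
  rw [hw i hi]
  cases i with
  | zero =>
    simp only [qA]
    rw [if_pos (by omega), h0, ht]
    exact .start
  | succ i =>
    have hc := hp i hi
    simp only [qA]
    by_cases h1 : i + 1 < k
    · rw [if_pos h1, if_pos (by omega)]
      exact .step hc (hf.2.2 i h1)
    · rw [if_neg h1, he (by omega)]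
      split_ifs
      · exact .toTop hc
      · exact .topLoop _

theorem qB_run {ν0 : P.Node} {τ2 : S.TC} {w : ℕ → Sig P} {νs : ℕ → P.Node} {τs : ℕ → S.TC}
    {n : ℕ} (hp : P.IsPath n νs) (h0 : νs 0 = ν0) (ht : τs 0 = τ2)
    (hf : P.FollowsR n νs n τs) (hw : ∀ i < n, w i = Sum.inl (νs i)) :
    IsRun (BTrans P O Excl ν0 τ2) .init n w (qB P νs τs n) := by
  refine ⟨rfl, ?_⟩
  intro i hi
  rw [hw i hi]
  cases i with
  | zero =>
    simp only [qB]
    rw [if_pos (by omega), h0, ht]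
    exact .start
  | succ i =>
    simp only [qB]
    rw [if_pos hi, if_pos (by omega)]
    exact .step (hp i hi) (hf.2.2 i hi)

theorem term_of_ax {μ : P.Node} {σ : S.TC} (h : P.Axiomatic μ) : P.TerminalR μ σ := by
  intro ν' hν'
  rw [PreProof.Axiomatic] at h
  rw [h] at hν'
  simp at hν'

theorem BFinal_term {μ : P.Node} {σ : S.TC} (h : BFinal P O Excl (.pair μ σ)) :
    P.TerminalR μ σ := by
  rcases h.2 with h | h
  · exact h.2
  · exact term_of_ax P h.1

theorem qA_pair (νs : ℕ → P.Node) (τs : ℕ → S.TA) (k : ℕ) (e : AState P.Node S.TA) :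
    ∀ i < k, qA P νs τs k e (i + 1) = .pair (νs i) (τs i) := by
  intro i hi
  simp [qA, hi]

theorem qA_end (νs : ℕ → P.Node) (τs : ℕ → S.TA) (k : ℕ) (e : AState P.Node S.TA) :
    ∀ i, k ≤ i → qA P νs τs k e (i + 1) = e := by
  intro i hi
  simp only [qA]
  rw [if_neg (by omega)]

theorem qB_pair (νs : ℕ → P.Node) (τs : ℕ → S.TC) (k : ℕ) :
    ∀ i < k, qB P νs τs k (i + 1) = .pair (νs i) (τs i) := by
  intro i hi
  simp [qB, hi]

theorem qB_end (νs : ℕ → P.Node) (τs : ℕ → S.TC) (k : ℕ) :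
    ∀ i, k ≤ i → qB P νs τs k (i + 1) = .bot := by
  intro i hi
  simp only [qB]
  rw [if_neg (by omega)]

end

theorem automata_construction_sound_complete
    (S : CES) (P : PreProof S) (O : OTF S)
    (Excl : P.Node → S.TC → Prop) (hExcl : P.ExclOK O Excl)
    (hproof : P.IsCyclicProof)
    (ν : P.Node) (τA : S.TA) (τC : S.TC)
    (hτA : τA ∈ S.tvA (P.seqOf ν).1) (hτC : τC ∈ S.tvC (P.seqOf ν).2)
    (strict : Bool) :
    P.TVO O Excl strict ν τA τC ↔
      ((∀ (m : ℕ) (w : ℕ → Sig P),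
          OptOrd strict (LangB P O Excl ν τC m w) (LangA P O ν τA m w)) ∧
        BGrounded P O Excl ν τC) := by
  have key : ∀ m w, OptOrd strict (LangB P O Excl ν τC m w) (LangA P O ν τA m w) ↔ _ :=
    fun m w => lang_ord (BTrans P O Excl ν τC) .init (BFinal P O Excl) (Bwt P)
      (ATrans P O ν τA) .init AFinal (Awt P) (btrans_fin P O Excl ν τC) (atrans_fin P O ν τA)
      strict m w
  simp only [key]
  constructor
  · intro H
    constructor
    · intro m w q hr hF
      generalize hqm : q m = s at hF
      cases s with
      | init => exact hF.elim
      | pair μ σ =>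
        obtain ⟨n1, νs, τs, hq, hp, h0, ht, hf, e1, e2⟩ := B_trace P O Excl hτC hr hqm
        obtain ⟨k, τs', k1, kn, t0, hfl, hv, -⟩ := H m νs τs n1 hp h0 ht hf
          (by rw [e1, e2]; exact BFinal_term P O Excl hF) (by rw [e1, e2]; exact hF.1)
        refine ⟨qA P νs τs' k .top, qA_run P O hp h0 t0 k1 hfl (fun i hi => (hq i hi).1)
          (fun _ => rfl), ?_, ?_⟩
        · obtain ⟨j, rfl⟩ : ∃ j, m = j + 1 := ⟨m - 1, by omega⟩
          simp only [AFinal, qA]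
          split_ifs <;> simp
        · rw [B_val P n1 le_rfl hr.1 (fun i hi => (hq i hi).2) (fun i h h' => by omega),
            A_val P (νs := νs) k1 kn rfl (qA_pair P νs τs' k _)
              (fun i h _ μ σ => by rw [qA_end P _ _ _ _ i h]; simp)]
          exact hv
      | bot =>
        cases m with
        | zero => rw [hr.1] at hqm; cases hqm
        | succ n =>
          have hl := hr.2 n (by omega)
          rw [hqm] at hl
          have hr' : IsRun (BTrans P O Excl ν τC) .init n w q :=
            ⟨hr.1, fun i hi => hr.2 i (by omega)⟩
          generalize hqn : q n = s at hl
          generalize hwn : w n = a at hl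
          cases hl with
          | @toBot μ σ g1 g2 g3 g4 =>
            obtain ⟨n1, νs, τs, hq, hp, h0, ht, hf, e1, e2⟩ := B_trace P O Excl hτC hr' hqn
            obtain ⟨k, τs', k1, kn, t0, hfl, hv, hg⟩ := H n νs τs n1 hp h0 ht hf
              (by rw [e1, e2]; exact term_of_ax P g1) (by rw [e1, e2]; exact g4)
            rw [e1, e2] at hg
            rcases hg with hg | ⟨-, rfl, hg⟩
            · exact absurd hg g3
            have hrA := qA_run P O (e := .bot) hp h0 t0 k1 hfl (fun i hi => (hq i hi).1)
              (fun h => absurd h (lt_irrefl _))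
            refine ⟨qA P νs τs' k .bot, ⟨rfl, ?_⟩, ?_, ?_⟩
            · intro i hi
              rcases Nat.lt_succ_iff_lt_or_eq.1 hi with hi | rfl
              · exact hrA.2 i hi
              · rw [qA_end P _ _ _ _ i le_rfl, hwn]
                have := qA_pair P νs τs' i .bot (i - 1) (by omega)
                rw [show i - 1 + 1 = i by omega, e1] at this
                rw [this]
                refine .toBot g1 g2 ⟨?_, hg⟩
                have := hfl.2.1 (i - 1) (by omega)
                rwa [e1] at this
            · rw [qA_end P _ _ _ _ k le_rfl]; simp [AFinal]
            · rw [B_val P n1 (Nat.le_succ _) hr.1 (fun i hi => (hq i hi).2)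
                (fun i h h' μ σ => by
                  obtain rfl : i = k := by omega
                  rw [hqm]; simp),
                A_val P (νs := νs) k1 (Nat.le_succ _) rfl (qA_pair P νs τs' k _)
                (fun i h _ μ σ => by rw [qA_end P _ _ _ _ i h]; simp)]
              exact hv
    · rintro μ σ ⟨m, w, q, hr, hqm, hF⟩
      obtain ⟨n1, νs, τs, hq, hp, h0, ht, hf, e1, e2⟩ := B_trace P O Excl hτC hr hqm
      obtain ⟨k, τs', k1, kn, t0, hfl, hv, hg⟩ := H m νs τs n1 hp h0 ht hf
        (by rw [e1, e2]; exact BFinal_term P O Excl hF) (by rw [e1, e2]; exact hF.1)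
      rw [e1, e2] at hg
      rcases hg with hg | ⟨ha, -, -⟩
      · exact hg
      · rcases hF.2 with h | h
        · exact absurd ha h.1
        · exact h.2
  · rintro ⟨H, G⟩ n νs τs n1 hp h0 ht hf hterm hex
    by_cases hg : P.Ground O (νs (n - 1)) (τs (n - 1))
    · have hrB := qB_run P O Excl (w := fun i => Sum.inl (νs i)) hp h0 ht hf (fun _ _ => rfl)
      have hpl := qB_pair P νs τs n (n - 1) (by omega)
      rw [show n - 1 + 1 = n by omega] at hpl
      obtain ⟨q', hr, -, hv⟩ := H n _ _ hrB (by
        rw [hpl]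
        refine ⟨hex, ?_⟩
        by_cases ha : P.Axiomatic (νs (n - 1))
        · exact Or.inr ⟨ha, hg⟩
        · exact Or.inl ⟨ha, hterm⟩)
      obtain ⟨k, τs', k1, kn, t0, hfl, hq, htop⟩ :=
        A_shape P O (νs := νs) hτA n n1 hr (fun _ _ => rfl)
      refine ⟨k, τs', k1, kn, t0, hfl, ?_, Or.inl hg⟩
      rwa [B_val P (νs := νs) n1 le_rfl rfl (qB_pair P νs τs n) (fun i h h' => by omega),
        A_val P k1 kn hr.1 hq (fun i h h' μ σ => by rw [htop i h h']; simp)] at hv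
    · by_cases ha : P.Axiomatic (νs (n - 1))
      · set w : ℕ → Sig P := fun i => if i < n then Sum.inl (νs i) else
          Sum.inr (P.Tset O (νs (n - 1)) (τs (n - 1)), τs (n - 1)) with hw
        have hwl : ∀ i < n, w i = Sum.inl (νs i) := fun i hi => by simp [hw, hi]
        have hwr : w n = Sum.inr (P.Tset O (νs (n - 1)) (τs (n - 1)), τs (n - 1)) := by
          simp [hw]
        have hrB := qB_run P O Excl (w := w) hp h0 ht hf hwl
        have hpl := qB_pair P νs τs n (n - 1) (by omega)
        rw [show n - 1 + 1 = n by omega] at hpl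
        have hrB' : IsRun (BTrans P O Excl ν τC) .init (n + 1) w (qB P νs τs n) := by
          refine ⟨rfl, ?_⟩
          intro i hi
          rcases Nat.lt_succ_iff_lt_or_eq.1 hi with hi | rfl
          · exact hrB.2 i hi
          · rw [qB_end P _ _ _ i le_rfl, hwr, hpl]
            exact .toBot ha (hf.2.1 _ (by omega)) hg hex
        obtain ⟨q', hr, -, hv⟩ := H (n + 1) _ _ hrB' (by
          rw [qB_end P _ _ _ n le_rfl]; trivial)
        obtain ⟨k, τs', k1, kn, t0, hfl, hq, htop⟩ :=
          A_shape P O (νs := νs) hτA n n1 ⟨hr.1, fun i hi => hr.2 i (by omega)⟩ hwl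
        have hl := hr.2 n (by omega)
        rw [hwr] at hl
        obtain rfl : k = n := by
          by_contra hne
          have := htop (n - 1) (by omega) (by omega)
          rw [show n - 1 + 1 = n by omega] at this
          rw [this] at hl
          cases hl
        have hqk := hq (k - 1) (by omega)
        rw [show k - 1 + 1 = k by omega] at hqk
        rw [hqk] at hl
        have hbot : q' (k + 1) = .bot ∧ τs' (k - 1) ∈ P.Tset O (νs (k - 1)) (τs (k - 1)) := by
          generalize q' (k + 1) = s at hl
          generalize hT : P.Tset O (νs (k - 1)) (τs (k - 1)) = T at hl
          cases hl with
          | toBot g1 g2 g3 => exact ⟨rfl, by rw [hT] at g3; exact g3⟩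
        refine ⟨k, τs', k1, kn, t0, hfl, ?_, Or.inr ⟨ha, rfl, hbot.2.2⟩⟩
        rwa [B_val P (νs := νs) n1 (Nat.le_succ _) rfl (qB_pair P νs τs k)
            (fun i h _ μ σ => by rw [qB_end P _ _ _ i h]; simp),
          A_val P k1 (Nat.le_succ _) hr.1 hq (fun i h h' μ σ => by
            obtain rfl : i = k := by omega
            rw [hbot.1]; simp)] at hv
      · exfalso
        have hrB := qB_run P O Excl (w := fun i => Sum.inl (νs i)) hp h0 ht hf (fun _ _ => rfl)
        have hpl := qB_pair P νs τs n (n - 1) (by omega)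
        rw [show n - 1 + 1 = n by omega] at hpl
        exact hg (G _ _ ⟨n, _, _, hrB, hpl, hex, Or.inl ⟨ha, hterm⟩⟩)
end
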